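/- arXiv:2201.00496 — 2 statements merged into one kernel-verified Lean document; each statement's English description precedes it below -/
import Mathlib

section
/- Let D be a domain of strict linear orders on a finite set A with |A| ≥ 3, and suppose D satisfies path-connectedness and leaf symmetry. Then D is a non-dictatorial domain if and only if D satisfies the unique seconds property. -/
open Classical

/-- A strict preference over `A`, represented as a ranking bijection:
`P k` is the `(k+1)`-th ranked alternative. -/
abbrev Pref (A : Type*) [Fintype A] := Fin (Fintype.card A) ≃ A

variable {A : Type*} [Fintype A] [DecidableEq A] [Nonempty A]

/-- `rk P k` : the `(k+1)`-th ranked alternative of `P` (0-indexed, so `rk P 0 = r₁(P)`). -/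
noncomputable def rk (P : Pref A) (k : ℕ) : A :=
  if h : k < Fintype.card A then P ⟨k, h⟩ else Classical.arbitrary A

/-- The peak `r₁(P)`. -/
noncomputable def peak (P : Pref A) : A := rk P 0

/-- The second-ranked alternative `r₂(P)`. -/
noncomputable def second (P : Pref A) : A := rk P 1

/-- `a` is strictly preferred to `b` under `P`. -/
def prefers (P : Pref A) (a b : A) : Prop := P.symm a < P.symm b

/-- Two preferences are completely reversed. -/
def Reversed (P P' : Pref A) : Prop := ∀ a b : A, prefers P a b ↔ prefers P' b a

/-- A profile lies in the domain `D`. -/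
def InDom (D : Set (Pref A)) {n : ℕ} (P : Fin n → Pref A) : Prop := ∀ i, P i ∈ D

/-- Unanimity (an SCF satisfying it is called a rule). -/
def IsRule (D : Set (Pref A)) {n : ℕ} (f : (Fin n → Pref A) → A) : Prop :=
  ∀ P : Fin n → Pref A, InDom D P → ∀ a : A, (∀ i, peak (P i) = a) → f P = a

/-- Strategy-proofness (relative to the domain `D`). -/
def StrategyProof (D : Set (Pref A)) {n : ℕ} (f : (Fin n → Pref A) → A) : Prop :=
  ∀ P : Fin n → Pref A, InDom D P → ∀ i : Fin n, ∀ Q ∈ D,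
    f P = f (Function.update P i Q) ∨ prefers (P i) (f P) (f (Function.update P i Q))

/-- The tops-only property. -/
def TopsOnly (D : Set (Pref A)) {n : ℕ} (f : (Fin n → Pref A) → A) : Prop :=
  ∀ P P' : Fin n → Pref A, InDom D P → InDom D P' →
    (∀ i, peak (P i) = peak (P' i)) → f P = f P'

/-- Anonymity. -/
def Anonymous (D : Set (Pref A)) {n : ℕ} (f : (Fin n → Pref A) → A) : Prop :=
  ∀ P : Fin n → Pref A, InDom D P → ∀ σ : Equiv.Perm (Fin n), f (P ∘ σ) = f P

/-- `f` behaves like a dictatorship on `B`. -/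
def DictatorOn (D : Set (Pref A)) {n : ℕ} (f : (Fin n → Pref A) → A) (B : Set A) : Prop :=
  ∃ i : Fin n, ∀ P : Fin n → Pref A, InDom D P → (∀ j, peak (P j) ∈ B) → f P = peak (P i)

/-- `f` is a dictatorship. -/
def Dictatorship (D : Set (Pref A)) {n : ℕ} (f : (Fin n → Pref A) → A) : Prop :=
  DictatorOn D f Set.univ

/-- A dictatorial domain. -/
def DictatorialDomain (D : Set (Pref A)) : Prop :=
  ∀ n : ℕ, 2 ≤ n → ∀ f : (Fin n → Pref A) → A,
    IsRule D f → StrategyProof D f → Dictatorship D f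

/-- A tops-only domain. -/
def TopsOnlyDomain (D : Set (Pref A)) : Prop :=
  ∀ n : ℕ, 2 ≤ n → ∀ f : (Fin n → Pref A) → A,
    IsRule D f → StrategyProof D f → TopsOnly D f

/-- Adjacency of two alternatives relative to the domain `D`. -/
def DomAdjacent (D : Set (Pref A)) (a b : A) : Prop :=
  ∃ P ∈ D, ∃ P' ∈ D, peak P = a ∧ second P = b ∧ peak P' = b ∧ second P' = a ∧
    ∀ k : ℕ, 2 ≤ k → rk P k = rk P' k

/-- The adjacency graph `G_∼` of the domain `D`. -/
noncomputable def adjGraph (D : Set (Pref A)) : SimpleGraph A :=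
  SimpleGraph.fromRel (DomAdjacent D)

/-- Path-connectedness of the domain. -/
def PathConnectedDom (D : Set (Pref A)) : Prop := (adjGraph D).Connected

/-- Diversity: the domain contains two completely reversed preferences. -/
def Diversity (D : Set (Pref A)) : Prop := ∃ P ∈ D, ∃ P' ∈ D, Reversed P P'

/-- `S(D^a)`: the set of alternatives second-ranked in some preference of `D` with peak `a`. -/
def secondsSet (D : Set (Pref A)) (a : A) : Set A := {b | ∃ P ∈ D, peak P = a ∧ second P = b}

/-- Leaf symmetry. -/
def LeafSymmetry (D : Set (Pref A)) : Prop :=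
  ∀ x : A, (∃! y, (adjGraph D).Adj x y) →
    (∃ u ∈ secondsSet D x, ∃ v ∈ secondsSet D x, u ≠ v) →
    ∃ z ∈ secondsSet D x, ¬ (adjGraph D).Adj x z ∧ x ∈ secondsSet D z

/-- Unidimensionality: path-connectedness, diversity and leaf symmetry. -/
def Unidimensional (D : Set (Pref A)) : Prop :=
  PathConnectedDom D ∧ Diversity D ∧ LeafSymmetry D

/-- The unique seconds property. -/
def UniqueSeconds (D : Set (Pref A)) : Prop := ∃ x b : A, secondsSet D x = {b}

/-- Minimal richness. -/
def MinimallyRich (D : Set (Pref A)) : Prop := ∀ a : A, ∃ P ∈ D, peak P = a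

/-- The vertex set `⟨x, y|T⟩` of the (in a tree, unique) shortest path between `x` and `y`. -/
def intv (T : SimpleGraph A) (x y : A) : Set A :=
  {z | T.dist x z + T.dist z y = T.dist x y}

/-- `a'` is the projection of `a` onto `B` in `T`. -/
def IsProjPt (T : SimpleGraph A) (B : Set A) (a a' : A) : Prop :=
  a' ∈ B ∧ ∀ b ∈ B, a' ∈ intv T a b

/-- The projection `Proj(a, B)` of `a` onto a path-closed set `B` in the tree `T`. -/
noncomputable def projOn (T : SimpleGraph A) (B : Set A) (a : A) : A :=
  if h : ∃ a', IsProjPt T B a a' then h.choose else a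

/-- `Γ(P)`: the vertex set of the minimal subtree of `T` spanning all the peaks. -/
def gammaSet (T : SimpleGraph A) {n : ℕ} (P : Fin n → Pref A) : Set A :=
  {c | ∃ i j : Fin n, c ∈ intv T (peak (P i)) (peak (P j))}

/-- The projection rule on `T` w.r.t. `xbar`. -/
noncomputable def projRule (T : SimpleGraph A) (xbar : A) {n : ℕ}
    (P : Fin n → Pref A) : A :=
  projOn T (gammaSet T P) xbar

/-- Single-peakedness on a tree. -/
def SinglePeaked (T : SimpleGraph A) (P : Pref A) : Prop :=
  ∀ c d : A, c ≠ d → c ∈ intv T (peak P) d → prefers P c d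

/-- Semi-single-peakedness on `T` w.r.t. the threshold `xbar`. -/
def SemiSP (T : SimpleGraph A) (xbar : A) (P : Pref A) : Prop :=
  (∀ c d : A, c ∈ intv T (peak P) xbar → d ∈ intv T (peak P) xbar → c ≠ d →
    c ∈ intv T (peak P) d → prefers P c d) ∧
  (∀ c : A, c ∉ intv T (peak P) xbar →
    prefers P (projOn T (intv T (peak P) xbar) c) c)

/-- A semi-single-peaked domain. -/
def SemiSPDomain (D : Set (Pref A)) : Prop :=
  ∃ (T : SimpleGraph A) (xbar : A), T.IsTree ∧
    D ⊆ {P | SemiSP T xbar P} ∧ (adjGraph D).Connected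

/-- `A^{a⇀b}`: the alternatives whose path to `b` goes through `a`. -/
def sideSet (T : SimpleGraph A) (a b : A) : Set A := {z | a ∈ intv T z b}

/-- `x = max^P(B)`: `x` is `P`'s best alternative of `B`. -/
def IsBestOf (P : Pref A) (x : A) (B : Set A) : Prop :=
  x ∈ B ∧ ∀ y ∈ B, y ≠ x → prefers P x y

/-- `a` and `b` are dual-thresholds in the tree `T`. -/
def DualThresholds (T : SimpleGraph A) (a b : A) : Prop :=
  a ≠ b ∧ ∀ c : A, c ∉ intv T a b →
    projOn T (intv T a b) c = a ∨ projOn T (intv T a b) c = b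

/-- An `(a,b)`-semi-hybrid preference on `T`. -/
def SemiHybridPref (T : SimpleGraph A) (a b : A) (P : Pref A) : Prop :=
  (peak P ∈ sideSet T a b \ {a} → SemiSP T a P ∧ IsBestOf P b (sideSet T b a)) ∧
  (peak P ∈ sideSet T b a \ {b} → SemiSP T b P ∧ IsBestOf P a (sideSet T a b)) ∧
  (peak P ∈ intv T a b → IsBestOf P a (sideSet T a b) ∧ IsBestOf P b (sideSet T b a))

/-- `x` is a leaf of the subgraph of `G` induced on `B`. -/
def IsLeafOn (G : SimpleGraph A) (B : Set A) (x : A) : Prop :=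
  x ∈ B ∧ ∃! y, y ∈ B ∧ G.Adj x y

/-- `D` is an `(a,b)`-semi-hybrid domain on the tree `T`. -/
def SemiHybridDomainOn (D : Set (Pref A)) (T : SimpleGraph A) (a b : A) : Prop :=
  T.IsTree ∧ DualThresholds T a b ∧ D ⊆ {P | SemiHybridPref T a b P} ∧
  (adjGraph D).Connected ∧
  (¬ ∃ (T' : SimpleGraph A) (a' b' : A), T'.IsTree ∧ DualThresholds T' a' b' ∧
      D ⊆ {P | SemiHybridPref T' a' b' P} ∧ intv T' a' b' ⊂ intv T a b) ∧
  ((adjGraph D).IsTree →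
    ∀ x : A, IsLeafOn (adjGraph D) (intv T a b) x →
      ∃ P ∈ D, ¬ SemiSP (adjGraph D) x P)

/-- `D` is a semi-hybrid domain. -/
def SemiHybridDomain (D : Set (Pref A)) : Prop :=
  ∃ (T : SimpleGraph A) (a b : A), SemiHybridDomainOn D T a b

/-- An `(a,b)`-hybrid preference on `T`. -/
def HybridPref (T : SimpleGraph A) (a b : A) (P : Pref A) : Prop :=
  (∀ y z : A, ((y ∈ sideSet T a b ∧ z ∈ sideSet T a b) ∨
      (y ∈ sideSet T b a ∧ z ∈ sideSet T b a)) → y ≠ z →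
    y ∈ intv T (peak P) z → prefers P y z) ∧
  (peak P ∈ sideSet T a b \ {a} → IsBestOf P a (intv T a b)) ∧
  (peak P ∈ sideSet T b a \ {b} → IsBestOf P b (intv T a b))

/-- `D` is an `(a,b)`-hybrid domain on the tree `T`. -/
def HybridDomainOn (D : Set (Pref A)) (T : SimpleGraph A) (a b : A) : Prop :=
  T.IsTree ∧ DualThresholds T a b ∧ D ⊆ {P | HybridPref T a b P} ∧
  (adjGraph D).Connected ∧
  (¬ ∃ (T' : SimpleGraph A) (a' b' : A), T'.IsTree ∧ DualThresholds T' a' b' ∧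
      D ⊆ {P | HybridPref T' a' b' P} ∧ intv T' a' b' ⊂ intv T a b) ∧
  3 ≤ (intv T a b).ncard

/-- `f` is an `(a,b)`-hybrid rule on the tree `T`. -/
def IsHybridRule (D : Set (Pref A)) {n : ℕ} (f : (Fin n → Pref A) → A)
    (T : SimpleGraph A) (a b : A) : Prop :=
  T.IsTree ∧ DualThresholds T a b ∧ 3 ≤ (intv T a b).ncard ∧
  ∃ i : Fin n, ∀ P : Fin n → Pref A, InDom D P →
    (peak (P i) ∈ intv T a b → f P = peak (P i)) ∧
    (peak (P i) ∈ sideSet T a b \ {a} → f P = projOn T (gammaSet T P) a) ∧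
    (peak (P i) ∈ sideSet T b a \ {b} → f P = projOn T (gammaSet T P) b)

/-- The PNT rule on `T` w.r.t. the edge `(x, y)`, with the two distinguished voters `i, j`. -/
noncomputable def pntRule (T : SimpleGraph A) (x y : A) {n : ℕ} (i j : Fin n)
    (P : Fin n → Pref A) : A :=
  if peak (P i) ∈ sideSet T y x then peak (P i)
  else if peak (P j) ∈ sideSet T x y then projOn T (gammaSet T P) x
  else if prefers (P j) x y then x else y

/-- `(x, y)` is a critical spot in `T` for the domain `D`. -/
def CriticalSpot (D : Set (Pref A)) (T : SimpleGraph A) (x y : A) : Prop :=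
  T.Adj x y ∧
  (∀ P ∈ D, peak P ∈ sideSet T x y → SemiSP T y P) ∧
  (∀ P ∈ D, peak P ∈ sideSet T y x → IsBestOf P x (sideSet T x y)) ∧
  (∃ P ∈ D, ∃ P' ∈ D, peak P = peak P' ∧ peak P ∈ sideSet T y x ∧
    prefers P y x ∧ prefers P' x y)

/-- `x` is a path in the graph `G` (pairwise distinct, consecutive vertices adjacent). -/
def IsPathIn (G : SimpleGraph A) {v : ℕ} (x : Fin v → A) : Prop :=
  Function.Injective x ∧
  ∀ (k : ℕ) (h : k + 1 < v), G.Adj (x ⟨k, Nat.lt_of_succ_lt h⟩) (x ⟨k + 1, h⟩)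

/-- `x` is a cycle in the graph `G`. -/
def IsCycleIn (G : SimpleGraph A) {v : ℕ} (x : Fin v → A) : Prop :=
  Function.Injective x ∧
  (∀ (k : ℕ) (h : k + 1 < v), G.Adj (x ⟨k, Nat.lt_of_succ_lt h⟩) (x ⟨k + 1, h⟩)) ∧
  ∀ (h : 0 < v), G.Adj (x ⟨v - 1, Nat.sub_lt h Nat.one_pos⟩) (x ⟨0, h⟩)

/-- The line `L^A` induced by the ranking of the preference `P`. -/
noncomputable def lineOf (P : Pref A) : SimpleGraph A :=
  SimpleGraph.fromRel (fun a b =>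
    ∃ k : ℕ, k + 1 < Fintype.card A ∧ rk P k = a ∧ rk P (k + 1) = b)

/-- The median of three natural numbers. -/
def med3 (a b c : ℕ) : ℕ := max (min a b) (min (max a b) c)

/-- The two-voter profile in which voter `i` reports `Pi` and the other voter reports `Q`. -/
noncomputable def prof2 (i : Fin 2) (Pi Q : Pref A) : Fin 2 → Pref A :=
  Function.update (fun _ => Q) i Pi

/-!
If `x` is only ever followed by `b`, then letting the first voter dictate, except that when his peak
is `x` the second voter chooses between `x` and `b`, costs him nothing, and this two-voter rule is
not dictatorial.

Conversely, suppose that no alternative has a unique second, and consider a two-voter rule. When `a`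
and `b` are second to each other, one of the voters obtains his peak at every profile with peaks
`a` and `b`. If a voter obtains `a` against `b`, he also obtains `b` against any further `c ≠ a`,
as soon as one of the pairs `(a, b)`, `(b, c)` is an edge of the adjacency graph. Leaf symmetry
provides such a `c` at every `b`, so if *both* voters could impose `a` against `b`, this would
propagate along an infinite walk, which must close up in a finite set; there the two voters
contradict each other. Hence whoever obtains `a` against `b` also obtains `b` against `a`, and his
power spreads over the connected adjacency graph. More voters are reduced to two by letting the
first two voters report the same preference.
-/

section WeakPreference

variable {α : Type*} [Fintype α] {P : Pref α} {a b : α}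

/-- Weak preference: `a` is ranked at least as high as `b` by `P`. -/
abbrev WeaklyPrefers (P : Pref α) (a b : α) : Prop := P.symm a ≤ P.symm b

lemma weaklyPrefers_iff : WeaklyPrefers P a b ↔ a = b ∨ prefers P a b := by
  rw [WeaklyPrefers, le_iff_eq_or_lt, P.symm.injective.eq_iff, prefers]

lemma WeaklyPrefers.antisymm (hab : WeaklyPrefers P a b) (hba : WeaklyPrefers P b a) : a = b :=
  P.symm.injective (le_antisymm hab hba)

end WeakPreference

section Ranking

variable {α : Type*} [Fintype α] [Nonempty α] {P P' : Pref α} {a c x : α}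

lemma symm_peak (P : Pref α) : (P.symm (peak P) : ℕ) = 0 := by
  simp [peak, rk, Fintype.card_pos]

lemma weaklyPrefers_peak (P : Pref α) (a : α) : WeaklyPrefers P (peak P) a := by
  simp [WeaklyPrefers, Fin.le_def, symm_peak]

lemma WeaklyPrefers.eq_peak (h : WeaklyPrefers P a (peak P)) : a = peak P :=
  h.antisymm (weaklyPrefers_peak P a)

lemma symm_eq_symm_of_rk_eq (h : rk P (P.symm a) = rk P' (P.symm a)) : P'.symm a = P.symm a := by
  rw [Equiv.symm_apply_eq]
  simpa [rk] using h

lemma eq_of_rk_eq_of_weaklyPrefers {m : ℕ} (hrk : ∀ k, m ≤ k → rk P k = rk P' k)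
    (hc : m ≤ P.symm c) (hxc : WeaklyPrefers P x c) (hcx : WeaklyPrefers P' c x) : x = c := by
  have hc' : P'.symm c = P.symm c := symm_eq_symm_of_rk_eq (hrk _ hc)
  have hmx : m ≤ P'.symm x := (hc'.symm ▸ hc : m ≤ P'.symm c).trans hcx
  have hx' : P.symm x = P'.symm x := symm_eq_symm_of_rk_eq (hrk _ hmx).symm
  refine hxc.antisymm ?_
  rwa [WeaklyPrefers, hx', ← hc']

end Ranking

section Second

variable {α : Type*} [Fintype α] [Nontrivial α] {P : Pref α} {a : α}

lemma symm_second (P : Pref α) : (P.symm (second P) : ℕ) = 1 := by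
  simp [second, rk, Fintype.one_lt_card]

lemma second_ne_peak (P : Pref α) : second P ≠ peak P := fun h => by
  simpa [symm_peak, symm_second] using congrArg (fun a => (P.symm a : ℕ)) h

lemma one_le_symm_of_ne_peak (h : a ≠ peak P) : 1 ≤ (P.symm a : ℕ) := by
  rw [Nat.one_le_iff_ne_zero, ← symm_peak P, Fin.val_ne_iff]
  exact P.symm.injective.ne h

lemma weaklyPrefers_second (h : a ≠ peak P) : WeaklyPrefers P (second P) a := by
  rw [WeaklyPrefers, Fin.le_def, symm_second]
  exact one_le_symm_of_ne_peak h

lemma WeaklyPrefers.eq_peak_or_eq_second (h : WeaklyPrefers P a (second P)) :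
    a = peak P ∨ a = second P :=
  or_iff_not_imp_left.2 fun ha => h.antisymm (weaklyPrefers_second ha)

lemma two_le_symm_of_ne (h₁ : a ≠ peak P) (h₂ : a ≠ second P) : 2 ≤ (P.symm a : ℕ) := by
  refine Nat.lt_of_le_of_ne (one_le_symm_of_ne_peak h₁) fun h => ?_
  rw [← symm_second P, Fin.val_inj] at h
  exact h₂ (P.symm.injective h).symm

end Second

/-! ### Two-voter rules -/

section TwoVoterDefinitions

variable {α : Type*} [Fintype α]

/-- Strategy-proofness on `D` of a two-voter social choice function, in curried form. -/
structure IsStrategyProof₂ (D : Set (Pref α)) (f : Pref α → Pref α → α) : Prop where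
  left : ∀ ⦃P⦄, P ∈ D → ∀ ⦃P'⦄, P' ∈ D → ∀ ⦃Q⦄, Q ∈ D → WeaklyPrefers P (f P Q) (f P' Q)
  right : ∀ ⦃Q⦄, Q ∈ D → ∀ ⦃Q'⦄, Q' ∈ D → ∀ ⦃P⦄, P ∈ D → WeaklyPrefers Q (f P Q) (f P Q')

variable [Nonempty α]

/-- A strategy-proof two-voter rule on `D`, in curried form. Unanimity is only required when both
voters report the same preference; see `IsRule₂.eq_peak_of_peak_eq`. -/
structure IsRule₂ (D : Set (Pref α)) (f : Pref α → Pref α → α) : Prop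
    extends IsStrategyProof₂ D f where
  diag : ∀ ⦃P⦄, P ∈ D → f P P = peak P

/-- The first voter is a dictator of the two-voter social choice function `f`; applied to `flip f`,
the second voter is. -/
def Dictates (D : Set (Pref α)) (f : Pref α → Pref α → α) : Prop :=
  ∀ ⦃P⦄, P ∈ D → ∀ ⦃Q⦄, Q ∈ D → f P Q = peak P

/-- The first voter is decisive for `a` against `b`: his peak `a` is chosen whenever the peak of the
second voter is `b`. Applied to `flip f`, the roles of the voters are exchanged. -/
def Decisive (D : Set (Pref α)) (f : Pref α → Pref α → α) (a b : α) : Prop :=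
  ∀ ⦃P⦄, P ∈ D → peak P = a → ∀ ⦃Q⦄, Q ∈ D → peak Q = b → f P Q = a

/-- Each of `a` and `b` is second to the other in some preference of `D`. Adjacency strengthens this
by requiring the two preferences to agree below. -/
def MutualSeconds (D : Set (Pref α)) (a b : α) : Prop :=
  b ∈ secondsSet D a ∧ a ∈ secondsSet D b

/-- Every alternative is in mutual seconds with at least two others: with one besides any given `b`.
Path-connectedness alone only provides one. -/
def TwoMutualSeconds (D : Set (Pref α)) : Prop :=
  ∀ a b, ∃ c, c ≠ b ∧ MutualSeconds D a c

/-- `a` dominates `b` if they are mutual seconds and both voters are decisive for `a` against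
`b`. -/
structure Dominates (D : Set (Pref α)) (f : Pref α → Pref α → α) (a b : α) : Prop where
  mutualSeconds : MutualSeconds D a b
  decisive : Decisive D f a b
  decisive_flip : Decisive D (flip f) a b

end TwoVoterDefinitions

section TwoVoterRules

variable {α : Type*} [Fintype α] {D : Set (Pref α)} {f : Pref α → Pref α → α} {P Q Z : Pref α}

lemma IsStrategyProof₂.swap (hf : IsStrategyProof₂ D f) : IsStrategyProof₂ D (flip f) :=
  ⟨hf.right, hf.left⟩

lemma IsStrategyProof₂.eq_of_diag_eq (hf : IsStrategyProof₂ D f) (hP : P ∈ D) (hQ : Q ∈ D)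
    (h : f P P = f Q Q) : f P Q = f Q Q :=
  WeaklyPrefers.antisymm (h ▸ hf.right hQ hP hP) (hf.left hQ hP hQ)

lemma IsStrategyProof₂.uncurry (hf : IsStrategyProof₂ D f) :
    StrategyProof D (fun P : Fin 2 → Pref α => f (P 0) (P 1)) := fun P hP i Q hQ => by
  rw [← weaklyPrefers_iff]
  fin_cases i
  · simpa using hf.left (hP 0) hQ (hP 1)
  · simpa using hf.right (hP 1) hQ (hP 0)

variable [Nonempty α]

lemma IsStrategyProof₂.eq_peak_of_eq_peak (hf : IsStrategyProof₂ D f) (hP : P ∈ D) (hQ : Q ∈ D)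
    (hZ : Z ∈ D) (h : f Q Z = peak P) : f P Z = peak P :=
  WeaklyPrefers.eq_peak (h ▸ hf.left hP hQ hZ)

lemma IsRule₂.swap (hf : IsRule₂ D f) : IsRule₂ D (flip f) :=
  ⟨hf.toIsStrategyProof₂.swap, hf.diag⟩

lemma IsRule₂.eq_peak_of_peak_eq (hf : IsRule₂ D f) (hP : P ∈ D) (hQ : Q ∈ D)
    (h : peak P = peak Q) : f P Q = peak P :=
  hf.eq_peak_of_eq_peak hP hQ hQ ((hf.diag hQ).trans h.symm)

lemma IsRule₂.decisive_refl (hf : IsRule₂ D f) (a : α) : Decisive D f a a := by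
  rintro P hP rfl Q hQ hQP
  exact hf.eq_peak_of_peak_eq hP hQ hQP.symm

lemma IsRule₂.uncurry_isRule (hf : IsRule₂ D f) :
    IsRule D (fun P : Fin 2 → Pref α => f (P 0) (P 1)) := fun _ hP _ ha =>
  (hf.eq_peak_of_peak_eq (hP 0) (hP 1) ((ha 0).trans (ha 1).symm)).trans (ha 0)

lemma MutualSeconds.symm {a b : α} (h : MutualSeconds D a b) : MutualSeconds D b a := ⟨h.2, h.1⟩

lemma domAdjacent_of_adj {a b : α} (h : (adjGraph D).Adj a b) : DomAdjacent D a b := by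
  rw [adjGraph, SimpleGraph.fromRel_adj] at h
  rcases h with ⟨_, hab | ⟨P, hP, P', hP', h₁, h₂, h₁', h₂', hrk⟩⟩
  · exact hab
  · exact ⟨P', hP', P, hP, h₁', h₂', h₁, h₂, fun k hk => (hrk k hk).symm⟩

lemma mutualSeconds_of_adj {a b : α} (h : (adjGraph D).Adj a b) : MutualSeconds D a b := by
  obtain ⟨P, hP, P', hP', h₁, h₂, h₁', h₂', -⟩ := domAdjacent_of_adj h
  exact ⟨⟨P, hP, h₁, h₂⟩, ⟨P', hP', h₁', h₂'⟩⟩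

end TwoVoterRules

section Decisiveness

variable {α : Type*} [Fintype α] [Nontrivial α] {D : Set (Pref α)} {f : Pref α → Pref α → α}
  {P Q Z : Pref α} {a b c : α}

lemma MutualSeconds.ne (h : MutualSeconds D a b) : a ≠ b := by
  obtain ⟨⟨P, -, rfl, rfl⟩, -⟩ := h
  exact (second_ne_peak P).symm

lemma IsStrategyProof₂.eq_peak_or_eq_second (hf : IsStrategyProof₂ D f) (hP : P ∈ D) (hQ : Q ∈ D)
    (hZ : Z ∈ D) (h : f Q Z = second P) : f P Z = peak P ∨ f P Z = second P :=
  WeaklyPrefers.eq_peak_or_eq_second (h ▸ hf.left hP hQ hZ)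

lemma IsStrategyProof₂.eq_peak_of_second_eq_peak (hf : IsStrategyProof₂ D f) (hP : P ∈ D)
    (hQ : Q ∈ D) (hZ : Z ∈ D) (hPQ : second P = peak Q) (hfPQ : f P Q = peak P)
    (hfQZ : f Q Z = peak Q) : f P Z = peak P := by
  refine (hf.eq_peak_or_eq_second hP hQ hZ (hfQZ.trans hPQ.symm)).resolve_right fun hfPZ => ?_
  have hfPQ' : f P Q = peak Q := hf.swap.eq_peak_of_eq_peak hQ hZ hP (hfPZ.trans hPQ)
  exact second_ne_peak P (hPQ.trans (hfPQ'.symm.trans hfPQ))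

lemma IsRule₂.decisive_of_eq_peak (hf : IsRule₂ D f) (hP : P ∈ D) (hQ : Q ∈ D)
    (hPQ : second P = peak Q) (h : f P Q = peak P) : Decisive D f (peak P) (peak Q) := by
  intro P' hP' hP'P Q' hQ' hQ'Q
  have hfPQ' : f P Q' = peak P := hf.eq_peak_of_second_eq_peak hP hQ hQ' hPQ h
    (hf.eq_peak_of_peak_eq hQ hQ' hQ'Q.symm)
  rw [← hP'P] at hfPQ' ⊢
  exact hf.eq_peak_of_eq_peak hP' hP hQ' hfPQ'

lemma IsRule₂.decisive_or_decisive_flip (hf : IsRule₂ D f) (h : MutualSeconds D a b) :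
    Decisive D f a b ∨ Decisive D (flip f) b a := by
  obtain ⟨⟨P, hP, rfl, hPb⟩, ⟨Q, hQ, rfl, hQa⟩⟩ := h
  rcases hf.eq_peak_or_eq_second hP hQ hQ ((hf.diag hQ).trans hPb.symm) with hfPQ | hfPQ
  · exact Or.inl (hf.decisive_of_eq_peak hP hQ hPb hfPQ)
  · exact Or.inr (hf.swap.decisive_of_eq_peak hQ hP hQa (hfPQ.trans hPb))

lemma Decisive.not_decisive_flip (h : Decisive D f a b) (hab : MutualSeconds D a b) :
    ¬ Decisive D (flip f) b a := fun h' => by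
  have hne := hab.ne
  obtain ⟨⟨P, hP, hPa, -⟩, ⟨Q, hQ, hQb, -⟩⟩ := hab
  exact hne ((h hP hPa hQ hQb).symm.trans (h' hQ hQb hP hPa))

lemma Decisive.trans (hf : IsRule₂ D f) (hm : MutualSeconds D a b) (hab : Decisive D f a b)
    (hbc : Decisive D f b c) : Decisive D f a c := by
  obtain ⟨⟨P, hP, rfl, hPb⟩, ⟨Q, hQ, rfl, -⟩⟩ := hm
  intro P' hP' hP'P Z hZ hZc
  have hfPZ : f P Z = peak P := hf.eq_peak_of_second_eq_peak hP hQ hZ hPb (hab hP rfl hQ rfl)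
    (hbc hQ rfl hZ hZc)
  rw [← hP'P] at hfPZ ⊢
  exact hf.eq_peak_of_eq_peak hP' hP hZ hfPZ

/-! ### Propagation of decisiveness -/

-- If the second voter were decisive for `c` against `b`, he would still obtain `c` after the first
-- voter swaps `b` and `a` at the top; then with true peak `b` and second `c` he would gain by
-- reporting `c` against `a`.
lemma Decisive.of_adj_left (hf : IsRule₂ D f) (hab : (adjGraph D).Adj a b)
    (hbc : MutualSeconds D b c) (hac : a ≠ c) (h : Decisive D f a b) : Decisive D f b c := by
  refine (hf.decisive_or_decisive_flip hbc).resolve_right fun hcb => ?_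
  have hcb_ne : c ≠ b := hbc.ne.symm
  obtain ⟨P, hP, P', hP', rfl, rfl, hP'b, -, hrk⟩ := domAdjacent_of_adj hab
  obtain ⟨⟨S, hS, hSb, rfl⟩, ⟨Q, hQ, hQc, -⟩⟩ := hbc
  have hfP'Q : f P' Q = second S := hcb hQ hQc hP' hP'b
  have hfPQ : f P Q = second S :=
    eq_of_rk_eq_of_weaklyPrefers hrk (two_le_symm_of_ne hac.symm hcb_ne)
      (hfP'Q ▸ hf.left hP hP' hQ) (hfP'Q ▸ hf.left hP' hP hQ)
  have hfPS : f P S = peak P := h hP rfl hS hSb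
  rcases hf.swap.eq_peak_or_eq_second hS hQ hP hfPQ with hfPS' | hfPS'
  · exact hab.ne (hfPS.symm.trans (hfPS'.trans hSb))
  · exact hac (hfPS.symm.trans hfPS')

lemma Decisive.of_adj_right (hf : IsRule₂ D f) (hab : MutualSeconds D a b)
    (hbc : (adjGraph D).Adj b c) (hac : a ≠ c) (h : Decisive D f a b) : Decisive D f b c :=
  (hf.decisive_or_decisive_flip (mutualSeconds_of_adj hbc)).resolve_right fun hcb =>
    h.not_decisive_flip hab (hcb.of_adj_left hf.swap hbc.symm hab.symm hac.symm)

lemma Decisive.next (hf : IsRule₂ D f) (hab : MutualSeconds D a b) (hbc : MutualSeconds D b c)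
    (hadj : (adjGraph D).Adj a b ∨ (adjGraph D).Adj b c) (hac : a ≠ c) (h : Decisive D f a b) :
    Decisive D f b c :=
  hadj.elim (fun hadj => h.of_adj_left hf hadj hbc hac)
    (fun hadj => h.of_adj_right hf hab hadj hac)

lemma Dominates.next (hf : IsRule₂ D f) (hbc : MutualSeconds D b c)
    (hadj : (adjGraph D).Adj a b ∨ (adjGraph D).Adj b c) (hac : a ≠ c) (h : Dominates D f a b) :
    Dominates D f b c :=
  ⟨hbc, h.decisive.next hf h.mutualSeconds hbc hadj hac,
    h.decisive_flip.next hf.swap h.mutualSeconds hbc hadj hac⟩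

lemma IsRule₂.decisive_of_reflTransGen_dominates (hf : IsRule₂ D f)
    (h : Relation.ReflTransGen (Dominates D f) a b) : Decisive D f a b := by
  induction h using Relation.ReflTransGen.head_induction_on with
  | refl => exact hf.decisive_refl b
  | head hac _ hcb => exact hac.decisive.trans hf hac.mutualSeconds hcb

lemma IsRule₂.not_transGen_dominates_self (hf : IsRule₂ D f) (a : α) :
    ¬ Relation.TransGen (Dominates D f) a a := fun h => by
  obtain ⟨b, hab, hba⟩ := Relation.TransGen.head'_iff.1 h
  exact (hf.decisive_of_reflTransGen_dominates hba).not_decisive_flip hab.mutualSeconds.symm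
    hab.decisive_flip

lemma exists_mutualSeconds_extending (hpc : PathConnectedDom D)
    (hseconds : TwoMutualSeconds D) (a b : α) :
    ∃ c, a ≠ c ∧ MutualSeconds D b c ∧ ((adjGraph D).Adj a b ∨ (adjGraph D).Adj b c) := by
  by_cases hab : (adjGraph D).Adj a b
  · obtain ⟨c, hca, hbc⟩ := hseconds b a
    exact ⟨c, hca.symm, hbc, Or.inl hab⟩
  · obtain ⟨c, hbc⟩ := hpc.preconnected.exists_adj_of_nontrivial b
    exact ⟨c, fun hac => hab (hac ▸ hbc.symm), mutualSeconds_of_adj hbc, Or.inr hbc⟩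

lemma IsRule₂.not_dominates (hf : IsRule₂ D f) (hpc : PathConnectedDom D)
    (hseconds : TwoMutualSeconds D) (a b : α) : ¬ Dominates D f a b := by
  let r : α → α → Prop := Function.swap (Relation.TransGen (Dominates D f))
  have : IsTrans α r := ⟨fun _ _ _ hab hbc => hbc.trans hab⟩
  have : Std.Irrefl r := ⟨hf.not_transGen_dominates_self⟩
  induction a using (Finite.wellFounded_of_trans_of_irrefl r).induction generalizing b with
  | _ a ih =>
    intro hab
    obtain ⟨c, hac, hbc, hadj⟩ := exists_mutualSeconds_extending hpc hseconds a b
    exact ih b (.single hab) c (hab.next hf hbc hadj hac)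

/-! ### Dictatorship with two voters -/

lemma Decisive.symm_of_mutualSeconds (hf : IsRule₂ D f) (hpc : PathConnectedDom D)
    (hseconds : TwoMutualSeconds D) (hab : MutualSeconds D a b)
    (h : Decisive D f a b) : Decisive D f b a :=
  (hf.decisive_or_decisive_flip hab.symm).resolve_right fun h' =>
    hf.not_dominates hpc hseconds a b ⟨hab, h, h'⟩

lemma Decisive.of_adj_of_adj (hf : IsRule₂ D f) (hpc : PathConnectedDom D)
    (hseconds : TwoMutualSeconds D) (hab : (adjGraph D).Adj a b)
    (hbc : (adjGraph D).Adj b c) (h : Decisive D f a b) : Decisive D f b c := by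
  rcases eq_or_ne a c with rfl | hac
  · exact h.symm_of_mutualSeconds hf hpc hseconds (mutualSeconds_of_adj hab)
  · exact h.of_adj_left hf hab (mutualSeconds_of_adj hbc) hac

lemma Decisive.of_adj_of_reachable {x y : α} (hf : IsRule₂ D f) (hpc : PathConnectedDom D)
    (hseconds : TwoMutualSeconds D) (hab : (adjGraph D).Adj a b)
    (h : Decisive D f a b) (hbx : (adjGraph D).Reachable b x) (hxy : (adjGraph D).Adj x y) :
    Decisive D f x y := by
  obtain ⟨w⟩ := hbx
  induction w generalizing a with
  | nil => exact h.of_adj_of_adj hf hpc hseconds hab hxy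
  | cons hbc _ ih => exact ih hbc (h.of_adj_of_adj hf hpc hseconds hab hbc) hxy

lemma dictates_of_forall_adj_decisive (hf : IsRule₂ D f) (hpc : PathConnectedDom D)
    (h : ∀ a b, (adjGraph D).Adj a b → Decisive D f a b) : Dictates D f := by
  have hall : ∀ a b, Decisive D f a b := fun a b => by
    obtain ⟨w⟩ := hpc.preconnected a b
    induction w with
    | nil => exact hf.decisive_refl _
    | cons hab _ ih => exact (h _ _ hab).trans hf (mutualSeconds_of_adj hab) ih
  exact fun P hP Q hQ => hall _ _ hP rfl hQ rfl

lemma dictates_of_adj_of_decisive (hf : IsRule₂ D f) (hpc : PathConnectedDom D)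
    (hseconds : TwoMutualSeconds D) (hab : (adjGraph D).Adj a b)
    (h : Decisive D f a b) : Dictates D f :=
  dictates_of_forall_adj_decisive hf hpc fun x _ hxy =>
    h.of_adj_of_reachable hf hpc hseconds hab (hpc.preconnected b x) hxy

lemma IsRule₂.dictates_or_dictates_flip (hf : IsRule₂ D f) (hpc : PathConnectedDom D)
    (hseconds : TwoMutualSeconds D) : Dictates D f ∨ Dictates D (flip f) := by
  obtain ⟨a⟩ : Nonempty α := inferInstance
  obtain ⟨b, hab⟩ := hpc.preconnected.exists_adj_of_nontrivial a
  exact (hf.decisive_or_decisive_flip (mutualSeconds_of_adj hab)).imp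
    (dictates_of_adj_of_decisive hf hpc hseconds hab)
    (dictates_of_adj_of_decisive hf.swap hpc hseconds hab.symm)

end Decisiveness

/-! ### From two voters to many -/

section Profiles

variable {α : Type*} [Fintype α] {D : Set (Pref α)} {n : ℕ}

lemma InDom.cons {p : Pref α} {P : Fin n → Pref α} (hP : InDom D P) (hp : p ∈ D) :
    InDom D (Fin.cons p P : Fin (n + 1) → Pref α) :=
  fun i => Fin.cases hp hP i

lemma InDom.update {P : Fin n → Pref α} (hP : InDom D P) (i : Fin n) {Q : Pref α} (hQ : Q ∈ D) :
    InDom D (Function.update P i Q) := fun j => by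
  rcases eq_or_ne j i with rfl | hji
  · simpa using hQ
  · simpa [hji] using hP j

lemma InDom.induction_update {C : (Fin n → Pref α) → Prop} {R R' : Fin n → Pref α}
    (hR : InDom D R) (hR' : InDom D R') (h : C R)
    (step : ∀ S, InDom D S → C S → ∀ i, ∀ Q ∈ D, C (Function.update S i Q)) : C R' := by
  have hmixed : ∀ s : Finset (Fin n), C (s.piecewise R' R) := fun s => by
    induction s using Finset.induction_on with
    | empty => simpa using h
    | insert i s _ ih =>
      rw [Finset.piecewise_insert]
      refine step _ (fun j => ?_) ih i _ (hR' i)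
      by_cases hj : j ∈ s
      · simpa [hj] using hR' j
      · simpa [hj] using hR j
  simpa using hmixed Finset.univ

lemma StrategyProof.weaklyPrefers {f : (Fin n → Pref α) → α} (hs : StrategyProof D f)
    {P : Fin n → Pref α} (hP : InDom D P) (i : Fin n) {Q : Pref α} (hQ : Q ∈ D) :
    WeaklyPrefers (P i) (f P) (f (Function.update P i Q)) :=
  weaklyPrefers_iff.2 (hs P hP i Q hQ)

lemma StrategyProof.head {f : (Fin (n + 1) → Pref α) → α} (hs : StrategyProof D f)
    {p p' : Pref α} (hp : p ∈ D) (hp' : p' ∈ D) {P : Fin n → Pref α} (hP : InDom D P) :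
    WeaklyPrefers p (f (Fin.cons p P)) (f (Fin.cons p' P)) := by
  simpa [Fin.update_cons_zero] using hs.weaklyPrefers (hP.cons hp) 0 hp'

lemma StrategyProof.tail {f : (Fin (n + 1) → Pref α) → α} (hs : StrategyProof D f)
    {p : Pref α} (hp : p ∈ D) : StrategyProof D (fun P : Fin n → Pref α => f (Fin.cons p P)) :=
  fun P hP i Q hQ => by
    simpa [Fin.cons_update] using hs (Fin.cons p P) (hP.cons hp) i.succ Q hQ

/-- The social choice function for `n + 1` voters in which the report of the first voter is
submitted to `f` twice, on behalf of the first two of its `n + 2` voters. -/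
def clone (f : (Fin (n + 2) → Pref α) → α) (P : Fin (n + 1) → Pref α) : α := f (Fin.cons (P 0) P)

/-- The two-voter social choice function obtained from `f` by fixing the reports `R` of all voters
but the first two. -/
def fixTail (f : (Fin (n + 2) → Pref α) → α) (R : Fin n → Pref α) (p q : Pref α) : α :=
  f (Fin.cons p (Fin.cons q R : Fin (n + 1) → Pref α))

variable {f : (Fin (n + 2) → Pref α) → α}

lemma fixTail_tail_tail (P : Fin (n + 2) → Pref α) :
    fixTail f (Fin.tail (Fin.tail P)) (P 0) (P 1) = f P := by
  have htail : (Fin.cons (P 1) (Fin.tail (Fin.tail P)) : Fin (n + 1) → Pref α) = Fin.tail P :=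
    Fin.cons_self_tail (Fin.tail P)
  rw [fixTail, htail, Fin.cons_self_tail]

lemma strategyProof_clone (hs : StrategyProof D f) : StrategyProof D (clone f) := by
  intro P hP i Q hQ
  rw [← weaklyPrefers_iff]
  have hsecond : WeaklyPrefers (P i) (f (Fin.cons (P 0) P))
      (f (Fin.cons (P 0) (Function.update P i Q))) := (hs.tail (hP 0)).weaklyPrefers hP i hQ
  cases i using Fin.cases with
  | zero =>
    rw [clone, clone, Function.update_self]
    exact hsecond.trans (hs.head (hP 0) hQ (hP.update 0 hQ))
  | succ i => rwa [clone, clone, Function.update_of_ne (Fin.succ_ne_zero i).symm]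

lemma isStrategyProof₂_fixTail (hs : StrategyProof D f) {R : Fin n → Pref α} (hR : InDom D R) :
    IsStrategyProof₂ D (fixTail f R) where
  left _ hp _ hp' _ hq := hs.head hp hp' (hR.cons hq)
  right _ hq _ hq' _ hp := (hs.tail hp).head hq hq' hR

variable [Nonempty α]

lemma isRule_clone (hu : IsRule D f) : IsRule D (clone f) :=
  fun _ hP a ha => hu _ (hP.cons (hP 0)) a (Fin.cases (ha 0) ha)

lemma dictatorship_iff {f : (Fin n → Pref α) → α} :
    Dictatorship D f ↔ ∃ i, ∀ P, InDom D P → f P = peak (P i) := by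
  simp [Dictatorship, DictatorOn]

end Profiles

section ManyVoters

variable {α : Type*} [Fintype α] [Nonempty α] {D : Set (Pref α)} {n : ℕ}
  {f : (Fin (n + 2) → Pref α) → α}

lemma StrategyProof.eq_peak_of_clone_eq_peak_succ (hs : StrategyProof D f) {i : Fin n}
    (h : ∀ P, InDom D P → clone f P = peak (P i.succ)) {P : Fin (n + 2) → Pref α}
    (hP : InDom D P) : f P = peak (P i.succ.succ) := by
  have hR : InDom D (Fin.tail (Fin.tail P)) := fun j => hP j.succ.succ
  have hdiag : ∀ {p}, p ∈ D → fixTail f (Fin.tail (Fin.tail P)) p p = peak (P i.succ.succ) :=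
    fun hp => h _ (hR.cons hp)
  rw [← fixTail_tail_tail (f := f) P]
  exact ((isStrategyProof₂_fixTail hs hR).eq_of_diag_eq (hP 0) (hP 1)
    ((hdiag (hP 0)).trans (hdiag (hP 1)).symm)).trans (hdiag (hP 1))

lemma StrategyProof.isRule₂_fixTail (hs : StrategyProof D f)
    (h : ∀ P, InDom D P → clone f P = peak (P 0)) {R : Fin n → Pref α} (hR : InDom D R) :
    IsRule₂ D (fixTail f R) :=
  ⟨isStrategyProof₂_fixTail hs hR, fun _ hp => h _ (hR.cons hp)⟩

-- A voter able to transfer the dictatorship from one of the first two voters to the other chooses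
-- between their peaks `x` and `y`; as he can do so with the two peaks in either order, he would
-- have to prefer both `x` to `y` and `y` to `x`.
lemma StrategyProof.not_dictates_flip_fixTail_update [Nontrivial α] (hs : StrategyProof D f)
    (hrich : MinimallyRich D) {R : Fin n → Pref α} (hR : InDom D R) {i : Fin n} {Q : Pref α}
    (hQ : Q ∈ D) (h : Dictates D (fixTail f R)) :
    ¬ Dictates D (flip (fixTail f (Function.update R i Q))) := fun h' => by
  obtain ⟨x, y, hxy⟩ := exists_pair_ne α
  obtain ⟨p, hp, rfl⟩ := hrich x
  obtain ⟨q, hq, rfl⟩ := hrich y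
  have hi : ∀ {p q}, p ∈ D → q ∈ D → WeaklyPrefers (R i) (peak p) (peak q) := fun {p q} hp hq => by
    rw [← h hp hq, ← h' hq hp]
    exact ((hs.tail hp).tail hq).weaklyPrefers hR i hQ
  exact hxy ((hi hp hq).antisymm (hi hq hp))

lemma StrategyProof.dictatorship_of_fixTail [Nontrivial α] (hs : StrategyProof D f)
    (hrich : MinimallyRich D)
    (h : ∀ R, InDom D R → Dictates D (fixTail f R) ∨ Dictates D (flip (fixTail f R))) :
    Dictatorship D f := by
  have htail : ∀ {P : Fin (n + 2) → Pref α}, InDom D P → InDom D (Fin.tail (Fin.tail P)) :=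
    fun hP j => hP j.succ.succ
  rw [dictatorship_iff]
  by_cases hex : ∃ R, InDom D R ∧ Dictates D (fixTail f R)
  · obtain ⟨R, hR, hdict⟩ := hex
    refine ⟨0, fun P hP => ?_⟩
    have hdict' : Dictates D (fixTail f (Fin.tail (Fin.tail P))) :=
      hR.induction_update (htail hP) hdict fun S hS hS' i Q hQ =>
        (h _ (hS.update i hQ)).resolve_right
          (hs.not_dictates_flip_fixTail_update hrich hS hQ hS')
    rw [← fixTail_tail_tail (f := f) P]
    exact hdict' (hP 0) (hP 1)
  · refine ⟨1, fun P hP => ?_⟩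
    rw [← fixTail_tail_tail (f := f) P]
    exact (h _ (htail hP)).resolve_left (fun hdict => hex ⟨_, htail hP, hdict⟩) (hP 1) (hP 0)

lemma dictatorship_of_forall_isRule₂ [Nontrivial α] (hrich : MinimallyRich D)
    (htwo : ∀ g, IsRule₂ D g → Dictates D g ∨ Dictates D (flip g)) (n : ℕ)
    (f : (Fin (n + 1) → Pref α) → α) (hu : IsRule D f) (hs : StrategyProof D f) :
    Dictatorship D f := by
  induction n with
  | zero =>
    exact dictatorship_iff.2 ⟨0, fun P hP => hu P hP _ fun i => by rw [Fin.fin_one_eq_zero i]⟩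
  | succ n ih =>
    obtain ⟨i, hi⟩ := dictatorship_iff.1 (ih (clone f) (isRule_clone hu) (strategyProof_clone hs))
    cases i using Fin.cases with
    | zero =>
      exact hs.dictatorship_of_fixTail hrich fun R hR => htwo _ (hs.isRule₂_fixTail hi hR)
    | succ i =>
      exact dictatorship_iff.2 ⟨i.succ.succ, fun _ hP => hs.eq_peak_of_clone_eq_peak_succ hi hP⟩

end ManyVoters

/-! ### The two implications -/

section UniqueSecondsRule

variable {α : Type*} [Fintype α] [Nonempty α]

/-- The two-voter rule in which the first voter dictates, except that when his peak is `x` the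
second voter chooses between `x` and `b`. -/
noncomputable def delegationRule (x b : α) (P Q : Pref α) : α :=
  if peak P = x then (if prefers Q x b then x else b) else peak P

end UniqueSecondsRule

section Implications

variable {α : Type*} [Fintype α] [Nontrivial α] {D : Set (Pref α)}

lemma isRule₂_delegationRule {x b : α} (h : ∀ P ∈ D, peak P = x → second P = b) :
    IsRule₂ D (delegationRule x b) where
  left P hP P' _ Q _ := by
    by_cases hPQ : delegationRule x b P Q = peak P
    · exact hPQ ▸ weaklyPrefers_peak P _
    have hPx : peak P = x := by
      by_contra hPx
      exact hPQ (if_neg hPx)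
    have hQ : ¬ prefers Q x b := fun hQ => hPQ (by simp [delegationRule, hPx, hQ])
    have hbx : b ≠ x := h P hP hPx ▸ hPx ▸ second_ne_peak P
    have hfPQ : delegationRule x b P Q = second P := by
      simp [delegationRule, hPx, hQ, h P hP hPx]
    rw [hfPQ]
    refine weaklyPrefers_second (hPx.symm ▸ ?_)
    by_cases hP'x : peak P' = x <;> simp [delegationRule, hP'x, hQ, hbx]
  right Q _ Q' _ P _ := by
    by_cases hPx : peak P = x
    · rw [delegationRule, delegationRule, if_pos hPx, if_pos hPx]
      split_ifs with hQ hQ' hQ'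
      · exact le_rfl
      · exact le_of_lt hQ
      · exact not_lt.1 hQ
      · exact le_rfl
    · simp [delegationRule, hPx]
  diag P hP := by
    by_cases hPx : peak P = x
    · have hbx : x ≠ b := (h P hP hPx ▸ hPx ▸ second_ne_peak P : b ≠ x).symm
      have hxb : prefers P x b :=
        (weaklyPrefers_iff.1 (hPx ▸ weaklyPrefers_peak P b)).resolve_left hbx
      simp [delegationRule, hPx, hxb]
    · simp [delegationRule, hPx]

lemma PathConnectedDom.minimallyRich (hpc : PathConnectedDom D) : MinimallyRich D := fun a => by
  obtain ⟨b, hab⟩ := hpc.preconnected.exists_adj_of_nontrivial a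
  obtain ⟨⟨P, hP, hPa, -⟩, -⟩ := mutualSeconds_of_adj hab
  exact ⟨P, hP, hPa⟩

theorem UniqueSeconds.not_dictatorialDomain (hD : UniqueSeconds D) (hrich : MinimallyRich D) :
    ¬ DictatorialDomain D := fun hdict => by
  obtain ⟨x, b, hxb⟩ := hD
  have hsecond : ∀ P ∈ D, peak P = x → second P = b := fun P hP hPx =>
    hxb.subset ⟨P, hP, hPx, rfl⟩
  have hrule := isRule₂_delegationRule hsecond
  obtain ⟨i, hi⟩ := dictatorship_iff.1 (hdict 2 le_rfl _ hrule.uncurry_isRule hrule.uncurry)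
  obtain ⟨Px, hPx, rfl⟩ := hrich x
  obtain ⟨Pb, hPb, rfl⟩ := hrich b
  have hne : peak Pb ≠ peak Px := hsecond Px hPx rfl ▸ second_ne_peak Px
  have hPb_not : ¬ prefers Pb (peak Px) (peak Pb) := (weaklyPrefers_peak Pb (peak Px)).not_gt
  fin_cases i
  · have h := hi ![Px, Pb] (Fin.forall_fin_two.2 ⟨hPx, hPb⟩)
    simp [delegationRule, hPb_not, hne] at h
  · have h := hi ![Pb, Px] (Fin.forall_fin_two.2 ⟨hPb, hPx⟩)
    simp [delegationRule, hne] at h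

lemma twoMutualSeconds_of_not_uniqueSeconds (hpc : PathConnectedDom D) (hls : LeafSymmetry D)
    (hus : ¬ UniqueSeconds D) : TwoMutualSeconds D := fun x y => by
  obtain ⟨z, hxz⟩ := hpc.preconnected.exists_adj_of_nontrivial x
  by_cases hleaf : ∃! z, (adjGraph D).Adj x z
  · have hseconds : ∃ u ∈ secondsSet D x, ∃ v ∈ secondsSet D x, u ≠ v := by
      by_contra! hsub
      have hz := (mutualSeconds_of_adj hxz).1
      exact hus ⟨x, z, Set.eq_singleton_iff_unique_mem.2 ⟨hz, fun u hu => hsub u hu z hz⟩⟩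
    obtain ⟨w, hw, hxw, hwx⟩ := hls x hleaf hseconds
    rcases eq_or_ne z y with rfl | hzy
    · exact ⟨w, fun hwz => hxw (hwz ▸ hxz), hw, hwx⟩
    · exact ⟨z, hzy, mutualSeconds_of_adj hxz⟩
  · by_contra! hall
    have hxy : ∀ z, (adjGraph D).Adj x z → z = y := fun z hxz => by
      by_contra hzy
      exact hall z hzy (mutualSeconds_of_adj hxz)
    exact hleaf ⟨y, hxy z hxz ▸ hxz, hxy⟩

theorem dictatorialDomain_of_not_uniqueSeconds (hpc : PathConnectedDom D) (hls : LeafSymmetry D)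
    (hus : ¬ UniqueSeconds D) : DictatorialDomain D := by
  intro n hn f hu hs
  obtain ⟨n, rfl⟩ : ∃ k, n = k + 1 := ⟨n - 1, by omega⟩
  have hseconds : TwoMutualSeconds D := twoMutualSeconds_of_not_uniqueSeconds hpc hls hus
  exact dictatorship_of_forall_isRule₂ hpc.minimallyRich
    (fun g hg => hg.dictates_or_dictates_flip hpc hseconds) n f hu hs

end Implications

/-- Auxiliary Proposition: a domain satisfying path-connectedness
and leaf symmetry is a non-dictatorial domain iff it satisfies the unique
seconds property. -/
theorem stmt0_auxiliary_proposition (D : Set (Pref A)) (hD : D.Nonempty)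
    (hcard : 3 ≤ Fintype.card A)
    (hpc : PathConnectedDom D) (hls : LeafSymmetry D) :
    ¬ DictatorialDomain D ↔ UniqueSeconds D := by
  have : Nontrivial A := Fintype.one_lt_card_iff_nontrivial.1 (by omega)
  exact ⟨fun hnd => by_contra fun hus => hnd (dictatorialDomain_of_not_uniqueSeconds hpc hls hus),
    fun hus => hus.not_dictatorialDomain hpc.minimallyRich⟩
end

section
/- Let D be a non-dictatorial, unidimensional domain and let f : D^2 → A be an invariant, tops-only and strategy-proof rule. Then the adjacency graph G_∼ is a tree and f is the projection rule on G_∼ w.r.t. the alternative x* = f(P̲, P̄); in particular, every invariant, tops-only and strategy-proof two-voter rule on D is a projection rule. -/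
open Classical

variable {A : Type*} [Fintype A] [DecidableEq A] [Nonempty A]

/-!
On a pair of reports with peaks `(a, c)`, strategy-proofness allows a move of one peak along an edge
`a ∼ b` to change the outcome only from `a` to `b`. So fixing one voter turns the rule `F` on peaks
into a map that retracts the graph edge by edge, and such a map sends `a` to a vertex met by every
walk from `a` to any fixed vertex. Reversal of `P̲` and `P̄`, with invariance, makes
`x = F(P̲, P̄)` absorbing: otherwise some neighbour of `x` would be fixed by the options of both
`P̲` and `P̄`, one of whom dislikes it. Hence `x` and both peaks are fixed vertices, and `F a b`
separates any two of `a`, `b`, `x`. For an edge `a ∼ b` this says that one endpoint separates the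
other from `x`, which excludes cycles; in general it says that `F a b` is the projection of `x`
onto the path between `a` and `b`.
-/

section Separation

variable {V : Type*} {G : SimpleGraph V} {a b x y z : V}

/-- The vertex `y` separates `a` from `b` in `G`: every walk from `a` to `b` visits `y`. The
endpoints are not excluded, so `a` and `b` separate `a` from `b`. -/
def Separates (G : SimpleGraph V) (y a b : V) : Prop :=
  ∀ w : G.Walk a b, y ∈ w.support

theorem dist_add_dist_of_mem_support (hG : G.Connected) (w : G.Walk a b)
    (hw : w.length = G.dist a b) (hy : y ∈ w.support) :
    G.dist a y + G.dist y b = G.dist a b := by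
  have hsplit := congrArg SimpleGraph.Walk.length (w.take_spec hy)
  rw [SimpleGraph.Walk.length_append] at hsplit
  have htake := G.dist_le (w.takeUntil y hy)
  have hdrop := G.dist_le (w.dropUntil y hy)
  have htri : G.dist a b ≤ G.dist a y + G.dist y b := hG.dist_triangle
  omega

theorem mem_intv_self_iff (hG : G.Connected) : z ∈ intv G a a ↔ z = a := by
  simp [intv, hG.dist_eq_zero_iff, eq_comm]

theorem intv_comm (G : SimpleGraph V) (a b : V) : intv G a b = intv G b a := by
  ext z
  simp only [intv, Set.mem_ofPred_eq, G.dist_comm (u := b), G.dist_comm (v := a), add_comm]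

namespace Separates

theorem mem_intv (h : Separates G y a b) (hG : G.Connected) : y ∈ intv G a b := by
  obtain ⟨w, hw⟩ := hG.exists_walk_length_eq_dist a b
  exact dist_add_dist_of_mem_support hG w hw (h w)

theorem antisymm (hba : Separates G b a x) (hab : Separates G a b x) (hG : G.Connected) :
    a = b := by
  have h₁ : G.dist a b + G.dist b x = G.dist a x := hba.mem_intv hG
  have h₂ : G.dist b a + G.dist a x = G.dist b x := hab.mem_intv hG
  exact hG.dist_eq_zero_iff.mp (by omega)

theorem of_walk (h : Separates G y a x) (w : G.Walk a b) (hy : y ∉ w.support) :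
    Separates G y b x := fun p =>
  ((w.mem_support_append_iff p).mp (h (w.append p))).resolve_left hy

theorem eq_of_adj (hab : G.Adj a b) (hac : G.Adj a z) (hb : Separates G b a x)
    (hz : Separates G z a x) (hG : G.Connected) : b = z := by
  by_contra hne
  have hbz : Separates G b z x :=
    hb.of_walk hac.toWalk (by simp [hab.ne', hne])
  have hzb : Separates G z b x :=
    hz.of_walk hab.toWalk (by simp [hac.ne', Ne.symm hne])
  exact hne (hzb.antisymm hbz hG)

end Separates

theorem isBridge_of_separates (hG : G.Connected)
    (hx : ∀ ⦃a b⦄, G.Adj a b → Separates G a b x ∨ Separates G b a x)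
    (hab : G.Adj a b) (hb : Separates G b a x) : G.IsBridge s(a, b) := by
  rw [SimpleGraph.isBridge_iff_forall_walk_mem_edges]
  intro w
  refine w.edges_toPath_subset_edges ?_
  obtain ⟨p, hp⟩ := w.toPath
  cases p with
  | nil => exact absurd rfl hab.ne
  | @cons _ c _ hac q =>
    have haq : a ∉ q.support := (SimpleGraph.Walk.cons_isPath_iff _ _).mp hp |>.2
    rcases hx hac with ha | hc
    · have hab' : Separates G a b x := ha.of_walk q haq
      exact absurd (hb.antisymm hab' hG) hab.ne
    · obtain rfl := hb.eq_of_adj hab hac hc hG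
      simp

theorem isTree_of_forall_adj_separates (hG : G.Connected)
    (hx : ∀ ⦃a b⦄, G.Adj a b → Separates G a b x ∨ Separates G b a x) : G.IsTree := by
  refine ⟨hG, SimpleGraph.isAcyclic_iff_forall_adj_isBridge.mpr fun a b hab => ?_⟩
  rcases hx hab with ha | hb
  · rw [Sym2.eq_swap]
    exact isBridge_of_separates hG hx hab.symm ha
  · exact isBridge_of_separates hG hx hab hb

/-- Two geodesic halves of the interval `⟨a, b⟩` meeting in `z` cannot both pass through `y ≠ z`, so
one of them leads to `z` without visiting `y`. -/
theorem Separates.of_mem_intv (ha : Separates G y a x) (hb : Separates G y b x)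
    (hG : G.Connected) (hz : z ∈ intv G a b) : Separates G y z x := by
  intro w
  obtain ⟨p, hp⟩ := hG.exists_walk_length_eq_dist a z
  obtain ⟨q, hq⟩ := hG.exists_walk_length_eq_dist b z
  by_contra hyw
  have hyp : y ∈ p.support :=
    ((p.mem_support_append_iff w).mp (ha (p.append w))).resolve_right hyw
  have hyq : y ∈ q.support :=
    ((q.mem_support_append_iff w).mp (hb (q.append w))).resolve_right hyw
  have haz := dist_add_dist_of_mem_support hG p hp hyp
  have hbz := dist_add_dist_of_mem_support hG q hq hyq
  have hab : G.dist a z + G.dist z b = G.dist a b := hz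
  have htri : G.dist a b ≤ G.dist a y + G.dist y b := hG.dist_triangle
  rw [G.dist_comm (u := b) (v := y), G.dist_comm (u := b) (v := z)] at hbz
  have hyz : y = z := hG.dist_eq_zero_iff.mp (by omega)
  exact hyw (hyz ▸ w.start_mem_support)

theorem isProjPt_intv_of_separates (hG : G.Connected) (hab : Separates G y a b)
    (ha : Separates G y a x) (hb : Separates G y b x) : IsProjPt G (intv G a b) x y := by
  refine ⟨hab.mem_intv hG, fun z hz => ?_⟩
  rw [intv_comm]
  exact (ha.of_mem_intv hb hG hz).mem_intv hG

theorem IsProjPt.unique {B : Set V} (hG : G.Connected) (hy : IsProjPt G B x y)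
    (hz : IsProjPt G B x z) : y = z := by
  have h₁ : G.dist x y + G.dist y z = G.dist x z := hy.2 z hz.1
  have h₂ : G.dist x z + G.dist z y = G.dist x y := hz.2 y hy.1
  exact hG.dist_eq_zero_iff.mp (by omega)

theorem IsProjPt.projOn_eq [Fintype V] {B : Set V} (hG : G.Connected) (hy : IsProjPt G B x y) :
    projOn G B x = y := by
  have hex : ∃ z, IsProjPt G B x z := ⟨y, hy⟩
  rw [projOn, dif_pos hex]
  exact hex.choose_spec.unique hG hy

end Separation

section EdgewiseRetraction

variable {V : Type*} {G : SimpleGraph V} {a b : V}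

/-- A map on the vertices of `G` is an edgewise retraction if it can only distinguish the ends of
an edge by fixing both of them. This is what strategy-proofness imposes on the outcome as a function
of one voter's peak. -/
def IsEdgewiseRetraction (G : SimpleGraph V) (g : V → V) : Prop :=
  ∀ ⦃a b⦄, G.Adj a b → g a = g b ∨ g a = a ∧ g b = b

namespace IsEdgewiseRetraction

variable {g : V → V}

theorem apply_eq_or_mem_support (h : IsEdgewiseRetraction G g) (w : G.Walk a b) :
    g b = g a ∨ g (g a) = g a ∧ g a ∈ w.support := by
  induction w with
  | nil => exact Or.inl rfl
  | cons hadj w ih =>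
    rcases h hadj with heq | ⟨hfix, -⟩
    · rw [heq]
      exact ih.imp_right fun ⟨hidem, hmem⟩ => ⟨hidem, List.mem_cons_of_mem _ hmem⟩
    · exact Or.inr ⟨congrArg g hfix, by simp [hfix]⟩

theorem apply_apply (h : IsEdgewiseRetraction G g) (hG : G.Preconnected) (a : V) :
    g (g a) = g a := by
  obtain ⟨w⟩ := hG a (g a)
  exact (h.apply_eq_or_mem_support w).elim id And.left

theorem separates (h : IsEdgewiseRetraction G g) (hb : g b = b) (a : V) :
    Separates G (g a) a b := fun w => by
  rcases h.apply_eq_or_mem_support w with heq | ⟨-, hmem⟩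
  · rw [← heq, hb]
    exact w.end_mem_support
  · exact hmem

theorem exists_adj_fixed (h : IsEdgewiseRetraction G g) (w : G.Walk a b) (hne : g b ≠ g a) :
    ∃ z, G.Adj (g a) z ∧ g z = z := by
  induction w with
  | nil => exact absurd rfl hne
  | cons hadj _ ih =>
    rcases h hadj with heq | ⟨hfix, hfix'⟩
    · rw [heq] at hne ⊢
      exact ih hne
    · exact ⟨_, hfix.symm ▸ hadj, hfix'⟩

end IsEdgewiseRetraction

end EdgewiseRetraction

section Biretraction

variable {V : Type*} {G : SimpleGraph V} {F : V → V → V} {x : V}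

/-- The combinatorial content of a unanimous, tops-only and strategy-proof two-voter rule, seen as a
binary operation on peaks. -/
structure IsBiretraction (G : SimpleGraph V) (F : V → V → V) : Prop where
  idem : ∀ a, F a a = a
  left : ∀ c, IsEdgewiseRetraction G fun a => F a c
  right : ∀ c, IsEdgewiseRetraction G (F c)

/-- The vertex `x` is absorbing for the binary operation `F`. -/
structure IsAbsorbing (F : V → V → V) (x : V) : Prop where
  left : ∀ c, F x c = x
  right : ∀ c, F c x = x

namespace IsBiretraction

theorem swap (h : IsBiretraction G F) : IsBiretraction G (Function.swap F) :=
  ⟨h.idem, h.right, h.left⟩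

theorem apply_left_eq (h : IsBiretraction G F) (hG : G.Preconnected) {S : Set V}
    (hx : ∀ v ∈ S, F v x = x) (huniq : ∀ z, (∀ v ∈ S, F v z = z) → z = x) (c : V) :
    F x c = x := by
  by_contra hc
  obtain ⟨w⟩ := hG x c
  obtain ⟨z, hadj, hz⟩ : ∃ z, G.Adj x z ∧ F x z = z := by
    simpa only [h.idem] using (h.right x).exists_adj_fixed w (by rwa [h.idem])
  have hfix : ∀ v ∈ S, F v z = z := by
    intro v hv
    rcases h.right v hadj with heq | ⟨-, hvz⟩
    · have hidem : F (F v z) z = F v z := (h.left z).apply_apply hG v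
      rw [← heq, hx v hv, hz] at hidem
      exact absurd hidem hadj.ne'
    · exact hvz
  exact hadj.ne' (huniq z hfix)

theorem isAbsorbing (h : IsBiretraction G F) (hG : G.Preconnected) {l u : V}
    (hlu : F l u = x) (hul : F u l = x) (hleft : ∀ z, F z l = z → F z u = z → z = x)
    (hright : ∀ z, F l z = z → F u z = z → z = x) : IsAbsorbing F x where
  left := by
    have hlx : F l x = x := hlu ▸ (h.right l).apply_apply hG u
    have hux : F u x = x := hul ▸ (h.right u).apply_apply hG l
    exact h.apply_left_eq hG (S := {l, u}) (by simp [hlx, hux])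
      fun z hz => hright z (hz l (by simp)) (hz u (by simp))
  right := by
    have hxl : F x l = x := hul ▸ (h.left l).apply_apply hG u
    have hxu : F x u = x := hlu ▸ (h.left u).apply_apply hG l
    exact h.swap.apply_left_eq hG (S := {l, u}) (by simp [Function.swap, hxl, hxu])
      fun z hz => hleft z (hz l (by simp)) (hz u (by simp))

theorem isTree (h : IsBiretraction G F) (hG : G.Connected) (hx : IsAbsorbing F x) : G.IsTree := by
  refine isTree_of_forall_adj_separates (x := x) hG fun a b hab => ?_
  rcases h.left b hab with hb | ⟨ha, -⟩
  · have hb : F a b = b := hb.trans (h.idem b)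
    exact Or.inr (by simpa only [hb] using (h.left b).separates (hx.left b) a)
  · exact Or.inl (by simpa only [ha] using (h.right a).separates (hx.right a) b)

theorem isProjPt (h : IsBiretraction G F) (hG : G.Connected) (hx : IsAbsorbing F x) (a b : V) :
    IsProjPt G (intv G a b) x (F a b) :=
  isProjPt_intv_of_separates hG ((h.left b).separates (h.idem b) a)
    ((h.left b).separates (hx.left b) a) ((h.right a).separates (hx.right a) b)

end IsBiretraction

end Biretraction

section Preferences

variable {X : Type*} [Fintype X] {D : Set (Pref X)} {P P' Q : Pref X} {a b y z : X}

theorem inDom_pair (hP : P ∈ D) (hQ : Q ∈ D) : InDom D ![P, Q] := by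
  simp [InDom, Fin.forall_fin_two, hP, hQ]

variable [Nonempty X]

theorem rk_val (P : Pref X) (k : Fin (Fintype.card X)) : rk P k = P k := by
  simp [rk]

theorem rk_symm_apply (P : Pref X) (a : X) : rk P (P.symm a) = a := by
  rw [rk_val, Equiv.apply_symm_apply]

theorem symm_apply_eq_of_rk_eq (h : ∀ k, 2 ≤ k → rk P k = rk P' k)
    (hz : 2 ≤ (P.symm z : ℕ)) : P'.symm z = P.symm z := by
  rw [Equiv.symm_apply_eq, ← rk_val, ← h _ hz, rk_symm_apply]

theorem eq_peak_and_eq_second_of_prefers (h : ∀ k, 2 ≤ k → rk P k = rk P' k)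
    (hP : prefers P y z) (hP' : prefers P' z y) : y = peak P ∧ z = second P := by
  have hlt : (P.symm y : ℕ) < P.symm z := hP
  have hlt' : (P'.symm z : ℕ) < P'.symm y := hP'
  have hz : (P.symm z : ℕ) < 2 := by
    by_contra! hz
    have hz' := symm_apply_eq_of_rk_eq h hz
    have hy' := symm_apply_eq_of_rk_eq (fun k hk => (h k hk).symm) (z := y) (by omega)
    omega
  constructor
  · rw [peak, ← show (P.symm y : ℕ) = 0 by omega, rk_symm_apply]
  · rw [second, ← show (P.symm z : ℕ) = 1 by omega, rk_symm_apply]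

theorem PathConnectedDom.minimallyRich_s2 (h : PathConnectedDom D) (hD : D.Nonempty) :
    MinimallyRich D := by
  intro a
  rcases subsingleton_or_nontrivial X with _ | _
  · obtain ⟨P, hP⟩ := hD
    exact ⟨P, hP, Subsingleton.elim _ _⟩
  · obtain ⟨b, hab⟩ := h.preconnected.exists_adj_of_nontrivial a
    rcases ((SimpleGraph.fromRel_adj _ _ _).mp hab).2 with
      ⟨P, hP, -, -, ha, -⟩ | ⟨-, -, P, hP, -, -, ha, -⟩
    · exact ⟨P, hP, ha⟩
    · exact ⟨P, hP, ha⟩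

/-- Strategy-proofness of a single voter whose outcome depends on the reported peak only, through
the map `g`. -/
def PeakStrategyProof (D : Set (Pref X)) (g : X → X) : Prop :=
  ∀ P ∈ D, ∀ Q ∈ D, g (peak P) = g (peak Q) ∨ prefers P (g (peak P)) (g (peak Q))

namespace PeakStrategyProof

variable {g g' : X → X}

theorem eq_or_fixed_of_domAdjacent (hg : PeakStrategyProof D g) (hab : DomAdjacent D a b) :
    g a = g b ∨ g a = a ∧ g b = b := by
  obtain ⟨P, hP, P', hP', hPa, hPb, hPb', -, hrest⟩ := hab
  have hdev := hg P hP P' hP'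
  have hdev' := hg P' hP' P hP
  rw [hPa, hPb'] at hdev hdev'
  rcases hdev with heq | hpref
  · exact Or.inl heq
  rcases hdev' with heq | hpref'
  · exact Or.inl heq.symm
  · obtain ⟨ha, hb⟩ := eq_peak_and_eq_second_of_prefers hrest hpref hpref'
    exact Or.inr ⟨ha.trans hPa, hb.trans hPb⟩

theorem isEdgewiseRetraction (hg : PeakStrategyProof D g) :
    IsEdgewiseRetraction (adjGraph D) g := by
  intro a b hab
  rcases ((SimpleGraph.fromRel_adj _ _ _).mp hab).2 with hab | hba
  · exact hg.eq_or_fixed_of_domAdjacent hab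
  · exact (hg.eq_or_fixed_of_domAdjacent hba).imp Eq.symm And.symm

theorem eq_of_reversed (hg : PeakStrategyProof D g) (hg' : PeakStrategyProof D g')
    (hrev : Reversed P P') (hP : P ∈ D) (hP' : P' ∈ D) (hQ : Q ∈ D)
    (hgg' : g' (peak P') = g (peak P)) (hfix : g (peak Q) = peak Q)
    (hfix' : g' (peak Q) = peak Q) : peak Q = g (peak P) := by
  have hdev := hg P hP Q hQ
  have hdev' := hg' P' hP' Q hQ
  rw [hfix] at hdev
  rw [hgg', hfix'] at hdev'
  rcases hdev with heq | hpref
  · exact heq.symm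
  rcases hdev' with heq | hpref'
  · exact heq.symm
  · exact absurd hpref' (lt_asymm ((hrev _ _).mp hpref))

end PeakStrategyProof

/-- `F` expresses the outcome of the two-voter SCF `f` on `D` through the two peaks. -/
def IsPeakForm (D : Set (Pref X)) (f : (Fin 2 → Pref X) → X) (F : X → X → X) : Prop :=
  ∀ P, InDom D P → f P = F (peak (P 0)) (peak (P 1))

variable {f : (Fin 2 → Pref X) → X} {F : X → X → X}

theorem TopsOnly.exists_isPeakForm (hf : TopsOnly D f) : ∃ F, IsPeakForm D f F := by
  let peaks (P : {P // InDom D P}) : X × X := (peak (P.1 (0 : Fin 2)), peak (P.1 1))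
  have hfactor : Function.FactorsThrough (fun P : {P // InDom D P} => f P.1) peaks :=
    fun P P' hPP' => hf P.1 P'.1 P.2 P'.2 <| by
      simpa [peaks, Fin.forall_fin_two] using hPP'
  exact ⟨fun a b => Function.extend peaks (fun P => f P.1) Prod.fst (a, b),
    fun P hP => (hfactor.extend_apply Prod.fst ⟨P, hP⟩).symm⟩

namespace IsPeakForm

theorem apply_pair (hF : IsPeakForm D f F) (hP : P ∈ D) (hQ : Q ∈ D) :
    f ![P, Q] = F (peak P) (peak Q) :=
  hF _ (inDom_pair hP hQ)

theorem peakStrategyProof_left (hF : IsPeakForm D f F) (hsp : StrategyProof D f) (hQ : Q ∈ D) :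
    PeakStrategyProof D fun a => F a (peak Q) := by
  intro P hP P' hP'
  have hupdate : Function.update ![P, Q] 0 P' = ![P', Q] := by
    ext i
    fin_cases i <;> rfl
  have hdev := hsp ![P, Q] (inDom_pair hP hQ) 0 P' hP'
  rwa [hupdate, hF.apply_pair hP hQ, hF.apply_pair hP' hQ] at hdev

theorem peakStrategyProof_right (hF : IsPeakForm D f F) (hsp : StrategyProof D f) (hQ : Q ∈ D) :
    PeakStrategyProof D (F (peak Q)) := by
  intro P hP P' hP'
  have hupdate : Function.update ![Q, P] 1 P' = ![Q, P'] := by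
    ext i
    fin_cases i <;> rfl
  have hdev := hsp ![Q, P] (inDom_pair hQ hP) 1 P' hP'
  rwa [hupdate, hF.apply_pair hQ hP, hF.apply_pair hQ hP'] at hdev

theorem isBiretraction (hF : IsPeakForm D f F) (hD : MinimallyRich D) (hrule : IsRule D f)
    (hsp : StrategyProof D f) : IsBiretraction (adjGraph D) F where
  idem a := by
    obtain ⟨P, hP, rfl⟩ := hD a
    rw [← hF.apply_pair hP hP]
    exact hrule _ (inDom_pair hP hP) _ (by simp [Fin.forall_fin_two])
  left c := by
    obtain ⟨P, hP, rfl⟩ := hD c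
    exact (hF.peakStrategyProof_left hsp hP).isEdgewiseRetraction
  right c := by
    obtain ⟨P, hP, rfl⟩ := hD c
    exact (hF.peakStrategyProof_right hsp hP).isEdgewiseRetraction

theorem isAbsorbing (hF : IsPeakForm D f F) (hD : PathConnectedDom D) (hP : P ∈ D) (hP' : P' ∈ D)
    (hrev : Reversed P P') (hrule : IsRule D f) (hsp : StrategyProof D f)
    (hinv : f ![P, P'] = f ![P', P]) : IsAbsorbing F (f ![P, P']) := by
  have hrich : MinimallyRich D := hD.minimallyRich_s2 ⟨P, hP⟩
  rw [hF.apply_pair hP hP', hF.apply_pair hP' hP] at hinv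
  rw [hF.apply_pair hP hP']
  refine (hF.isBiretraction hrich hrule hsp).isAbsorbing hD.preconnected rfl hinv.symm ?_ ?_
  · intro z hzP hzP'
    obtain ⟨Q, hQ, rfl⟩ := hrich z
    exact (hF.peakStrategyProof_left hsp hP').eq_of_reversed (hF.peakStrategyProof_left hsp hP)
      hrev hP hP' hQ hinv.symm hzP' hzP
  · intro z hzP hzP'
    obtain ⟨Q, hQ, rfl⟩ := hrich z
    exact hinv ▸ (hF.peakStrategyProof_right hsp hP').eq_of_reversed
      (hF.peakStrategyProof_right hsp hP) hrev hP hP' hQ hinv hzP' hzP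

end IsPeakForm

theorem gammaSet_fin_two {T : SimpleGraph X} (hT : T.Connected) (P : Fin 2 → Pref X) :
    gammaSet T P = intv T (peak (P 0)) (peak (P 1)) := by
  ext z
  have hself (a b : X) : z ∈ intv T a a → z ∈ intv T a b ∧ z ∈ intv T b a := by
    intro hz
    obtain rfl := (mem_intv_self_iff hT).mp hz
    simp [intv]
  simp only [gammaSet, Set.mem_ofPred_eq, Fin.exists_fin_two, intv_comm T (peak (P 1)) (peak (P 0))]
  grind

theorem stmt2_invariant_rule_is_projection_general (hD : PathConnectedDom D) {Pl Pu : Pref X}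
    (hPl : Pl ∈ D) (hPu : Pu ∈ D) (hrev : Reversed Pl Pu) (hrule : IsRule D f)
    (hto : TopsOnly D f) (hsp : StrategyProof D f) (hinv : f ![Pl, Pu] = f ![Pu, Pl]) :
    (adjGraph D).IsTree ∧
      ∀ P, InDom D P → f P = projRule (adjGraph D) (f ![Pl, Pu]) P := by
  obtain ⟨F, hF⟩ := hto.exists_isPeakForm
  have hretr : IsBiretraction (adjGraph D) F :=
    hF.isBiretraction (hD.minimallyRich_s2 ⟨Pl, hPl⟩) hrule hsp
  have habs : IsAbsorbing F (f ![Pl, Pu]) := hF.isAbsorbing hD hPl hPu hrev hrule hsp hinv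
  refine ⟨hretr.isTree hD habs, fun P hP => ?_⟩
  rw [hF P hP, projRule, gammaSet_fin_two hD]
  exact ((hretr.isProjPt hD habs _ _).projOn_eq hD).symm

end Preferences

/-- on a non-dictatorial, unidimensional domain, every invariant,
tops-only and strategy-proof two-voter rule makes the adjacency graph a tree and
is the projection rule on it w.r.t. `f(P̲, P̄)`; in particular it is a projection
rule. -/
theorem stmt2_invariant_rule_is_projection (D : Set (Pref A)) (hD : D.Nonempty)
    (hcard : 3 ≤ Fintype.card A) (huni : Unidimensional D)
    (hnd : ¬ DictatorialDomain D)
    (Pl Pu : Pref A) (hPl : Pl ∈ D) (hPu : Pu ∈ D) (hrev : Reversed Pl Pu)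
    (f : (Fin 2 → Pref A) → A) (hrule : IsRule D f) (hto : TopsOnly D f)
    (hsp : StrategyProof D f) (hinv : f ![Pl, Pu] = f ![Pu, Pl]) :
    (adjGraph D).IsTree ∧
    (∀ P : Fin 2 → Pref A, InDom D P → f P = projRule (adjGraph D) (f ![Pl, Pu]) P) ∧
    (∃ (T : SimpleGraph A) (xbar : A), T.IsTree ∧
      ∀ P : Fin 2 → Pref A, InDom D P → f P = projRule T xbar P) :=
  have ⟨hT, hf⟩ :=
    stmt2_invariant_rule_is_projection_general huni.1 hPl hPu hrev hrule hto hsp hinv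
  ⟨hT, hf, adjGraph D, f ![Pl, Pu], hT, hf⟩
end
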